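/- For all integers r, s, r', s' ≥ 1 with r + s = r' + s', and all n ≥ r + s, the cardinalities |D_n^{r,s}| and |D_n^{r',s'}| are equal; that is, |D_n^{r,s}| depends only on the sum r + s and not on the individual values of r and s. -/

import Mathlib

/-- A Dyck path of semilength `n`, encoded as a word on `Bool`
(`true` = up step `u`, `false` = down step `d`). -/
def IsDyckWord (n : ℕ) (w : List Bool) : Prop :=
  w.length = 2 * n ∧ w.count true = n ∧ w.count false = n ∧
    ∀ p : List Bool, p <+: w → p.count false ≤ p.count true

/-- The (0-based) indices of the up steps of `w`. -/
def upIdxs (w : List Bool) : List ℕ := w.findIdxs (· == true)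

/-- The (0-based) indices of the down steps of `w`. -/
def downIdxs (w : List Bool) : List ℕ := w.findIdxs (· == false)

/-- `rStat w i` is the number of `d`'s strictly between the `i`-th and the
`(i+1)`-st `u` of `w` (with `i` 1-indexed). -/
def rStat (w : List Bool) (i : ℕ) : ℕ :=
  ((w.take ((upIdxs w).getD i 0)).drop ((upIdxs w).getD (i - 1) 0 + 1)).count false

/-- `sStat w i` is the number of `u`'s strictly between the `i`-th and the
`(i+1)`-st `d` of `w` (with `i` 1-indexed). -/
def sStat (w : List Bool) (i : ℕ) : ℕ :=
  ((w.take ((downIdxs w).getD i 0)).drop ((downIdxs w).getD (i - 1) 0 + 1)).count true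

/-- The statistic `L(D) = ∏_{i=1}^{n-1} C(r_i + s_i, r_i)` of a Dyck path of semilength `n`. -/
def LStat (n : ℕ) (w : List Bool) : ℕ :=
  ∏ i ∈ Finset.Icc 1 (n - 1), Nat.choose (rStat w i + sStat w i) (rStat w i)

/-- `dyckL n k` = the set `𝒟ₙᵏ` of Dyck paths of semilength `n` with `L(D) = k`. -/
def dyckL (n k : ℕ) : Set (List Bool) := {w | IsDyckWord n w ∧ LStat n w = k}

/-- A Motzkin path, encoded as a word on `Option Bool`
(`some true` = up, `some false` = down, `none` = horizontal). -/
def IsMotzkinWord (w : List (Option Bool)) : Prop :=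
  w.count (some false) = w.count (some true) ∧
    ∀ p : List (Option Bool), p <+: w → p.count (some false) ≤ p.count (some true)

/-- `motzkin n` = the `n`-th Motzkin number `Mₙ`, the number of Motzkin paths of length `n`. -/
noncomputable def motzkin (n : ℕ) : ℕ :=
  {w : List (Option Bool) | w.length = n ∧ IsMotzkinWord w}.ncard

/-- The Motzkin ballot number `T_{n,k}`: the number of Motzkin paths of length `n`
whose first down step is in position `k` (1-indexed); by convention `T_{k-1,k} = 1`,
counting the path of `k-1` horizontal steps. -/
noncomputable def motzkinBallot (n k : ℕ) : ℕ :=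
  if n + 1 = k then 1
  else
    {w : List (Option Bool) | w.length = n ∧ IsMotzkinWord w ∧
      w.getD (k - 1) none = some false ∧ ∀ j < k - 1, w.getD j none ≠ some false}.ncard

/-- Motzkin numbers with integer index: `Mᵢ = 0` for `i < 0`. -/
noncomputable def motzkinZ (i : ℤ) : ℤ := if 0 ≤ i then (motzkin i.toNat : ℤ) else 0

/-- Motzkin ballot numbers with integer first index: `T_{n,k} = 0` for `n < 0`. -/
noncomputable def motzkinBallotZ (n : ℤ) (k : ℕ) : ℤ :=
  if 0 ≤ n then (motzkinBallot n.toNat k : ℤ) else 0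

/-- The set of returns of a Dyck path `w` of semilength `n`:
indices `1 ≤ k ≤ n` such that the path touches the `x`-axis after `2k` steps. -/
def returns (n : ℕ) (w : List Bool) : Finset ℕ :=
  (Finset.Icc 1 n).filter fun k => (w.take (2 * k)).count false = (w.take (2 * k)).count true

/-- `dyckRS n r s` = the set `𝒟ₙ^{r,s}` of Dyck paths of semilength `n` having exactly one
index `i` with `rᵢ > 0` and `sᵢ > 0`, and such that at that index `rᵢ = r` and `sᵢ = s`. -/
def dyckRS (n r s : ℕ) : Set (List Bool) :=
  {w | IsDyckWord n w ∧ ∃ i ∈ Finset.Icc 1 (n - 1),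
    (0 < rStat w i ∧ 0 < sStat w i) ∧ rStat w i = r ∧ sStat w i = s ∧
      ∀ j ∈ Finset.Icc 1 (n - 1), 0 < rStat w j ∧ 0 < sStat w j → j = i}

/-- `twoStars n w k₁ k₂` says that `k₁ < k₂` are exactly the two indices `i` of `w`
with `rᵢ > 0` and `sᵢ > 0`. -/
def twoStars (n : ℕ) (w : List Bool) (k₁ k₂ : ℕ) : Prop :=
  k₁ ∈ Finset.Icc 1 (n - 1) ∧ k₂ ∈ Finset.Icc 1 (n - 1) ∧ k₁ < k₂ ∧
    (0 < rStat w k₁ ∧ 0 < sStat w k₁) ∧ (0 < rStat w k₂ ∧ 0 < sStat w k₂) ∧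
    ∀ j ∈ Finset.Icc 1 (n - 1), 0 < rStat w j ∧ 0 < sStat w j → j = k₁ ∨ j = k₂

/-- `xStat w k` = the number of indices `i < k` with `rᵢ = 0` and `sᵢ > 0`. -/
def xStat (w : List Bool) (k : ℕ) : ℕ :=
  ((Finset.Ico 1 k).filter fun i => rStat w i = 0 ∧ 0 < sStat w i).card

/-- `yStat w k` = the number of indices `i < k` with `rᵢ > 0` and `sᵢ = 0`. -/
def yStat (w : List Bool) (k : ℕ) : ℕ :=
  ((Finset.Ico 1 k).filter fun i => 0 < rStat w i ∧ sStat w i = 0).card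

/-- The generating function `m(x) = Σ Mₙ xⁿ` of the Motzkin numbers, over `ℚ`. -/
noncomputable def motzkinGF : PowerSeries ℚ := PowerSeries.mk fun n => (motzkin n : ℚ)

/-! ### Counting words of a given length -/

section CountWords

variable {α : Type*}

/-- The number of words of length `l` satisfying `Q`. -/
noncomputable def countWords (l : ℕ) (Q : List α → Prop) : ℕ :=
  Nat.card {w : List α // w.length = l ∧ Q w}

lemma finite_words [Finite α] (l : ℕ) (Q : List α → Prop) :
    Finite {w : List α // w.length = l ∧ Q w} :=
  ((List.finite_length_eq α l).subset fun _ hw => hw.1).to_subtype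

open Classical in
lemma countWords_zero (Q : List α → Prop) :
    countWords 0 Q = if Q [] then 1 else 0 := by
  unfold countWords
  split_ifs with h
  · rw [Nat.card_eq_one_iff_unique]
    refine ⟨⟨fun u v => Subtype.ext ?_⟩, ⟨⟨[], rfl, h⟩⟩⟩
    rw [List.length_eq_zero_iff.1 u.2.1, List.length_eq_zero_iff.1 v.2.1]
  · rw [Nat.card_eq_zero]
    refine Or.inl ⟨fun u => h ?_⟩
    have := u.2.2
    rwa [List.length_eq_zero_iff.1 u.2.1] at this

lemma countWords_succ [Fintype α] (l : ℕ) (Q : List α → Prop) :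
    countWords (l + 1) Q = ∑ x, countWords l (fun w => Q (x :: w)) := by
  have := fun x => finite_words l (fun w : List α => Q (x :: w))
  unfold countWords
  rw [← Nat.card_sigma]
  refine Nat.card_congr ⟨fun u => match u with
    | ⟨x :: w, h⟩ => ⟨x, w, by simpa using h.1, h.2⟩,
    fun u => ⟨u.1 :: u.2.1, by simpa using u.2.2.1, u.2.2.2⟩, ?_, ?_⟩
  · rintro ⟨_ | ⟨x, w⟩, h⟩
    · simp at h
    · rfl
  · rintro ⟨x, w, h⟩
    rfl

lemma countWords_false (l : ℕ) : countWords l (fun _ : List α => False) = 0 := by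
  simp [countWords]

end CountWords

/-! ### Bicoloured Motzkin paths

A word on `Bool × Bool` is read as a lattice path: `(false, true)` is an up step,
`(true, false)` a down step, and `(false, false)`, `(true, true)` are horizontal. -/

/-- `IsPath t w t'` says that `w` leads from height `t` to height `t'` without going below `0`. -/
def IsPath : ℕ → List (Bool × Bool) → ℕ → Prop
  | t, [], t' => t = t'
  | t, (false, false) :: w, t' => IsPath t w t'
  | t, (true, true) :: w, t' => IsPath t w t'
  | t, (false, true) :: w, t' => IsPath (t + 1) w t'
  | 0, (true, false) :: _, _ => False
  | t + 1, (true, false) :: w, t' => IsPath t w t'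

/-- The distance between the `k`-th and the `(k+1)`-st `true` of a word, where the `0`-th one is
placed just before the word and one more just after it. -/
def gapAt : ℕ → List Bool → ℕ
  | 0, [] => 1
  | _ + 1, [] => 0
  | 0, true :: _ => 1
  | 0, false :: l => gapAt 0 l + 1
  | k + 1, true :: l => gapAt k l
  | k + 1, false :: l => gapAt (k + 1) l

lemma gapAt_zero_pos (l : List Bool) : 0 < gapAt 0 l := by
  rcases l with _ | ⟨_ | _, l⟩ <;> simp [gapAt]

section GeneratingFunctions

open PowerSeries

/-- The generating function, by length, of the paths from height `t` to `0` without the letter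
`(true, true)`. -/
noncomputable def descentGF (t : ℕ) : PowerSeries ℤ :=
  PowerSeries.mk fun l =>
    (countWords l fun w : List (Bool × Bool) => (true, true) ∉ w ∧ IsPath t w 0 : ℤ)

/-- The generating function, by length, of the paths from height `t` to `0` without the letter
`(true, true)` whose `h`-th gap between down steps is `s`. -/
noncomputable def gapGF (t h s : ℕ) : PowerSeries ℤ :=
  PowerSeries.mk fun l => (countWords l fun w : List (Bool × Bool) =>
    ((true, true) ∉ w ∧ IsPath t w 0) ∧ gapAt h (w.map Prod.fst) = s : ℤ)

lemma descentGF_zero : descentGF 0 = 1 + X * (descentGF 0 + descentGF 1) := by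
  ext l
  rcases l with _ | l
  · simp [descentGF, countWords_zero, IsPath]
  · rw [map_add, coeff_succ_X_mul]
    simp [descentGF, countWords_succ, Fintype.sum_prod_type, IsPath, countWords_false,
      coeff_one]
    ring

lemma descentGF_succ (t : ℕ) :
    descentGF (t + 1) = X * (descentGF (t + 1) + descentGF (t + 2) + descentGF t) := by
  ext l
  rcases l with _ | l
  · simp [descentGF, countWords_zero, IsPath]
  · rw [coeff_succ_X_mul]
    simp [descentGF, countWords_succ, Fintype.sum_prod_type, IsPath, countWords_false]
    ring

lemma gapGF_zero_zero_one : gapGF 0 0 1 = 1 := by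
  ext l
  rcases l with _ | l
  · simp [gapGF, countWords_zero, IsPath, gapAt]
  · simp [gapGF, countWords_succ, Fintype.sum_prod_type, IsPath, countWords_false,
      coeff_one, gapAt, (gapAt_zero_pos _).ne']

lemma gapGF_succ_zero_one (t : ℕ) : gapGF (t + 1) 0 1 = X * descentGF t := by
  ext l
  rcases l with _ | l
  · simp [gapGF, countWords_zero, IsPath, gapAt]
  · rw [coeff_succ_X_mul]
    simp [gapGF, descentGF, countWords_succ, Fintype.sum_prod_type,
      IsPath, countWords_false, gapAt, (gapAt_zero_pos _).ne']

lemma gapGF_zero_add_two (t s : ℕ) :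
    gapGF t 0 (s + 2) = X * (gapGF t 0 (s + 1) + gapGF (t + 1) 0 (s + 1)) := by
  ext l
  rcases l with _ | l
  · simp [gapGF, countWords_zero, IsPath, gapAt]
  · rw [coeff_succ_X_mul]
    simp [gapGF, countWords_succ, Fintype.sum_prod_type,
      IsPath, countWords_false, gapAt]
    ring

lemma gapGF_zero_succ (h s : ℕ) :
    gapGF 0 (h + 1) (s + 1) = X * (gapGF 0 (h + 1) (s + 1) + gapGF 1 (h + 1) (s + 1)) := by
  ext l
  rcases l with _ | l
  · simp [gapGF, countWords_zero, IsPath, gapAt]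
  · rw [coeff_succ_X_mul]
    simp [gapGF, countWords_succ, Fintype.sum_prod_type,
      IsPath, countWords_false, gapAt]
    ring

lemma gapGF_succ_succ (t h s : ℕ) :
    gapGF (t + 1) (h + 1) (s + 1) = X * (gapGF (t + 1) (h + 1) (s + 1)
      + gapGF (t + 2) (h + 1) (s + 1) + gapGF t h (s + 1)) := by
  ext l
  rcases l with _ | l
  · simp [gapGF, countWords_zero, IsPath, gapAt]
  · rw [coeff_succ_X_mul]
    simp [gapGF, countWords_succ, Fintype.sum_prod_type,
      IsPath, countWords_false, gapAt]
    ring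

/-- A family of power series satisfying a homogeneous transfer recursion vanishes. -/
lemma eq_zero_of_transfer (f : ℕ → PowerSeries ℤ) (c : ℤ) (h0 : f 0 = X * (f 0 + f 1))
    (hS : ∀ t, f (t + 1) = X * (f (t + 1) + f (t + 2) + c • f t)) (t : ℕ) : f t = 0 := by
  ext l
  rw [map_zero]
  induction l generalizing t with
  | zero => rcases t with _ | t <;> [rw [h0]; rw [hS]] <;> simp
  | succ l ih => rcases t with _ | t <;> [rw [h0]; rw [hS]] <;> simp [coeff_succ_X_mul, ih, -zsmul_eq_mul]

lemma descentGF_succ_eq (t : ℕ) : descentGF (t + 1) = X * descentGF 0 * descentGF t := by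
  refine sub_eq_zero.1
    (eq_zero_of_transfer (fun t => descentGF (t + 1) - X * descentGF 0 * descentGF t) 1 ?_ ?_ t)
  · linear_combination descentGF_succ 0 - X * descentGF 0 * descentGF_zero
  · intro t
    rw [one_smul]
    linear_combination descentGF_succ (t + 1) - X * descentGF 0 * descentGF_succ t

lemma gapGF_succ_zero_one_eq (t : ℕ) :
    gapGF (t + 1) 0 1 = X * descentGF 0 * gapGF t 0 1 := by
  rcases t with _ | t
  · rw [gapGF_succ_zero_one, gapGF_zero_zero_one, mul_one]
  · rw [gapGF_succ_zero_one, gapGF_succ_zero_one, descentGF_succ_eq]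
    ring

lemma gapGF_zero_eq (t s : ℕ) :
    gapGF t 0 (s + 2) = X * (1 + X * descentGF 0) * gapGF t 0 (s + 1) := by
  induction s generalizing t with
  | zero => linear_combination gapGF_zero_add_two t 0 + X * gapGF_succ_zero_one_eq t
  | succ s ih =>
    linear_combination gapGF_zero_add_two t (s + 1) + X * ih t + X * ih (t + 1) -
      X * (1 + X * descentGF 0) * gapGF_zero_add_two t s

/-- Increasing the gap by one multiplies the generating function by a factor independent of the
heights. -/
lemma gapGF_add_two (t h s : ℕ) :
    gapGF t h (s + 2) = X * (1 + X * descentGF 0) * gapGF t h (s + 1) := by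
  induction h generalizing t with
  | zero => exact gapGF_zero_eq t s
  | succ h ih =>
    refine sub_eq_zero.1 (eq_zero_of_transfer (fun t => gapGF t (h + 1) (s + 2) -
      X * (1 + X * descentGF 0) * gapGF t (h + 1) (s + 1)) 0 ?_ ?_ t)
    · linear_combination gapGF_zero_succ h (s + 1) -
        X * (1 + X * descentGF 0) * gapGF_zero_succ h s
    · intro t
      rw [zero_smul]
      linear_combination gapGF_succ_succ t h (s + 1) -
        X * (1 + X * descentGF 0) * gapGF_succ_succ t h s + X * ih t

lemma gapGF_eq_pow (t h s : ℕ) :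
    gapGF t h (s + 1) = (X * (1 + X * descentGF 0)) ^ s * gapGF t h 1 := by
  induction s with
  | zero => simp
  | succ s ih => rw [gapGF_add_two, ih]; ring

end GeneratingFunctions
/-! ### Ends of runs -/

/-- For each occurrence of `c` in the word, whether it ends a run of `c`'s. -/
def runEnds (c : Bool) : List Bool → List Bool
  | [] => []
  | x :: w => if x = c then decide (w.head? ≠ some c) :: runEnds c w else runEnds c w

lemma length_runEnds (c : Bool) (w : List Bool) : (runEnds c w).length = w.count c := by
  induction w with
  | nil => rfl
  | cons x w ih => by_cases h : x = c <;> simp [runEnds, h, ih]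

lemma getLast?_runEnds (c : Bool) (w : List Bool) : ∀ x ∈ (runEnds c w).getLast?, x = true := by
  induction w with
  | nil => simp [runEnds]
  | cons x w ih =>
    by_cases h : x = c
    · rcases hr : runEnds c w with _ | ⟨y, l⟩
      · have hc : c ∉ w := by
          rw [← List.count_eq_zero, ← length_runEnds, hr, List.length_nil]
        simp only [runEnds, h, hr, if_true, List.getLast?_singleton, Option.mem_some_iff]
        rintro _ rfl
        simpa using fun hw => hc (List.mem_of_mem_head? hw)
      · rw [hr] at ih
        simpa [runEnds, h, hr, List.getLast?_cons_cons] using ih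
    · simpa [runEnds, h] using ih

lemma count_runEnds_take (c e : Bool) (p q : List Bool) (h : (p ++ e :: q).head? = some c) :
    ((runEnds c (p ++ e :: q)).take (p.count c)).count true =
      ((runEnds (!c) (p ++ e :: q)).take (p.count (!c))).count true + if e = c then 0 else 1 := by
  induction p generalizing c with
  | nil => simp_all
  | cons x p ih =>
    obtain rfl : x = c := by simpa using h
    obtain ⟨y, hy⟩ : ∃ y, (p ++ e :: q).head? = some y := by cases p <;> simp
    have := ih y hy
    rcases x <;> rcases y <;> rcases e <;> simp [runEnds, hy] at this ⊢ <;> omega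

lemma count_runEnds (c : Bool) (w : List Bool) (h : w.head? = some c) :
    (runEnds c w).count true =
      (runEnds (!c) w).count true + if w.getLast? = some c then 1 else 0 := by
  induction w generalizing c with
  | nil => simp at h
  | cons x w ih =>
    obtain rfl : x = c := by simpa using h
    rcases w with _ | ⟨y, w⟩
    · cases x <;> simp [runEnds]
    · have := ih y rfl
      rw [List.getLast?_cons_cons]
      obtain ⟨z, hz⟩ : ∃ z, (y :: w).getLast? = some z := by simp [List.getLast?_cons]
      rw [hz] at this ⊢
      rcases x <;> rcases y <;> rcases z <;> simp [runEnds] at this ⊢ <;> omega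

lemma exists_split_of_lt_count (c : Bool) (w : List Bool) (m : ℕ) (hm : m < w.count c) :
    ∃ p q, w = p ++ c :: q ∧ p.count c = m := by
  induction w generalizing m with
  | nil => simp at hm
  | cons x w ih =>
    by_cases hx : x = c
    · subst hx
      rcases m with _ | m
      · exact ⟨[], w, rfl, rfl⟩
      · obtain ⟨p, q, rfl, rfl⟩ := ih m (by simpa using hm)
        exact ⟨x :: p, q, rfl, by simp⟩
    · obtain ⟨p, q, rfl, rfl⟩ := ih m (by simpa [hx] using hm)
      exact ⟨x :: p, q, rfl, by simp [hx]⟩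

lemma count_take_le_count_take (l : List Bool) {i j : ℕ} (h : i ≤ j) :
    (l.take i).count true ≤ (l.take j).count true :=
  (List.take_sublist_take_left h).count_le true

/-- The Dyck condition in terms of ends of runs. -/
lemma ballot_iff (w : List Bool) (hw : w.head? = some true)
    (hlen : w.count true = w.count false)
    (hcount : (runEnds true w).count true = (runEnds false w).count true) :
    (∀ p, p <+: w → p.count false ≤ p.count true) ↔
      ∀ m, ((runEnds true w).take m).count true ≤ ((runEnds false w).take m).count true := by
  constructor
  · intro H m
    rcases lt_or_ge m (w.count true) with hm | hm
    · obtain ⟨p, q, rfl, rfl⟩ := exists_split_of_lt_count true w m hm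
      have h1 := count_runEnds_take true true p q hw
      simp only [Bool.not_true, if_true, add_zero] at h1
      rw [h1]
      exact count_take_le_count_take _ (H p (List.prefix_append _ _))
    · rw [List.take_of_length_le (by rwa [length_runEnds]),
        List.take_of_length_le (by rwa [length_runEnds, ← hlen]), hcount]
  · intro H p
    induction p using List.reverseRecOn with
    | nil => simp
    | append_singleton p x ih =>
      intro hp
      have h1 := ih ((List.prefix_append _ _).trans hp)
      rcases x with _ | _
      · obtain ⟨q, rfl⟩ := hp
        simp only [List.append_assoc, List.cons_append, List.nil_append] at *
        have h2 := count_runEnds_take true false p q hw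
        simp only [Bool.not_true, Bool.false_eq_true, if_false] at h2
        have h3 := H (p.count true)
        rcases h1.lt_or_eq with h4 | h4
        · simpa using h4
        · rw [h4] at h2
          omega
      · simp
        omega

/-! ### Reconstruction of a word from its ends of runs -/

/-- The word with prescribed ends of `true`-runs `a` and of `false`-runs `b`, starting with a run
of the letter given by the first argument. -/
def fromRunEnds : Bool → List Bool → List Bool → List Bool
  | true, x :: a, b => true :: fromRunEnds (!x) a b
  | false, a, x :: b => false :: fromRunEnds x a b
  | true, [], _ => []
  | false, _, [] => []
  termination_by _ a b => a.length + b.length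

lemma fromRunEnds_runEnds (c : Bool) (w : List Bool) (h : ∀ x ∈ w.head?, x = c) :
    fromRunEnds c (runEnds true w) (runEnds false w) = w := by
  induction w generalizing c with
  | nil => cases c <;> simp [runEnds, fromRunEnds]
  | cons x w ih =>
    obtain rfl : x = c := by simpa using h
    rcases x with _ | _
    · simp only [runEnds, Bool.false_eq_true, if_false, if_true, fromRunEnds]
      rw [ih]
      rcases w with _ | ⟨_ | _, w⟩ <;> simp
    · simp only [runEnds, Bool.true_eq_false, if_false, if_true, fromRunEnds]
      rw [ih]
      rcases w with _ | ⟨_ | _, w⟩ <;> simp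

lemma head?_fromRunEnds_true (x : Bool) (a b : List Bool) :
    (fromRunEnds true (x :: a) b).head? = some true := by
  simp [fromRunEnds]

lemma head?_fromRunEnds_ne (c : Bool) (a b : List Bool) :
    (fromRunEnds (!c) a b).head? ≠ some c := by
  rcases c with _ | _ <;> rcases a with _ | _ <;> rcases b with _ | _ <;> simp [fromRunEnds]

lemma runEnds_fromRunEnds (c : Bool) (a b : List Bool)
    (ha : ∀ x ∈ a.getLast?, x = true) (hb : ∀ x ∈ b.getLast?, x = true)
    (hab : b.count true = a.count true + if c then 0 else 1) :
    runEnds true (fromRunEnds c a b) = a ∧ runEnds false (fromRunEnds c a b) = b := by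
  induction c, a, b using fromRunEnds.induct with
  | case1 x a b ih =>
    rcases x with _ | _
    · obtain ⟨y, a, rfl⟩ : ∃ y a', a = y :: a' := by
        rcases a with _ | ⟨y, a⟩
        · simp at ha
        · exact ⟨y, a, rfl⟩
      obtain ⟨h1, h2⟩ := ih (by simpa [List.getLast?_cons_cons] using ha) hb (by simpa using hab)
      simp only [Bool.not_false] at h1 h2
      rw [fromRunEnds]
      simp [runEnds, h1, h2, head?_fromRunEnds_true]
    · obtain ⟨h1, h2⟩ := ih (by
        rcases a with _ | ⟨y, a⟩
        · simp
        · simpa [List.getLast?_cons_cons] using ha) hb (by simpa using hab)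
      have h3 := head?_fromRunEnds_ne true a b
      simp only [Bool.not_true] at h1 h2 h3
      rw [fromRunEnds]
      simp [runEnds, h1, h2, h3]
  | case2 a x b ih =>
    rcases x with _ | _
    · obtain ⟨y, b, rfl⟩ : ∃ y b', b = y :: b' := by
        rcases b with _ | ⟨y, b⟩
        · simp at hb
        · exact ⟨y, b, rfl⟩
      obtain ⟨h1, h2⟩ := ih ha (by simpa [List.getLast?_cons_cons] using hb) (by simpa using hab)
      have h3 : (fromRunEnds false a (y :: b)).head? = some false := by simp [fromRunEnds]
      rw [fromRunEnds]
      simp [runEnds, h1, h2, h3]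
    · obtain ⟨h1, h2⟩ := ih ha (by
        rcases b with _ | ⟨y, b⟩
        · simp
        · simpa [List.getLast?_cons_cons] using hb) (by simpa using hab)
      have h3 := head?_fromRunEnds_ne false a b
      simp only [Bool.not_false] at h3
      rw [fromRunEnds]
      simp [runEnds, h1, h2, h3]
  | case3 b =>
    rcases List.eq_nil_or_concat b with rfl | ⟨b', x, rfl⟩
    · simp [fromRunEnds, runEnds]
    · simp_all
  | case4 a => simp at hab

/-! ### The statistics `rStat` and `sStat` in terms of ends of runs -/

/-- The number of letters other than `c` between the `i`-th and the `(i+1)`-st `c`, or before the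
first `c` if `i = 0`. -/
def gapLen (c : Bool) : List Bool → ℕ → ℕ
  | [], _ => 0
  | x :: w, 0 => if x = c then 0 else gapLen c w 0 + 1
  | x :: w, i + 1 => if x = c then gapLen c w i else gapLen c w (i + 1)

lemma findIdxs_beq_cons (c x : Bool) (w : List Bool) :
    (x :: w).findIdxs (· == c) = if x = c then 0 :: (w.findIdxs (· == c)).map (· + 1)
      else (w.findIdxs (· == c)).map (· + 1) := by
  rw [List.findIdxs_cons]
  simp [List.findIdxs_start (s := 0 + 1)]

lemma length_findIdxs_beq (c : Bool) (w : List Bool) :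
    (w.findIdxs (· == c)).length = w.count c := by
  simp [List.count]

lemma getD_map_add_one (l : List ℕ) (i : ℕ) (hi : i < l.length) :
    (l.map (· + 1)).getD i 0 = l.getD i 0 + 1 := by
  simp [List.getD, hi]

lemma count_take_findIdxs (c : Bool) (w : List Bool) (h : 0 < w.count c) :
    (w.take ((w.findIdxs (· == c)).getD 0 0)).count (!c) = gapLen c w 0 := by
  induction w with
  | nil => simp at h
  | cons x w ih =>
    rw [findIdxs_beq_cons]
    by_cases hx : x = c
    · simp [hx, gapLen]
    · have h' : 0 < w.count c := by simpa [hx] using h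
      rw [if_neg hx, getD_map_add_one _ _ (by rwa [length_findIdxs_beq]), List.take_succ_cons,
        gapLen, if_neg hx, ← ih h', Bool.eq_not.2 hx, List.count_cons_self]

lemma count_drop_take_findIdxs (c : Bool) (w : List Bool) (i : ℕ) (h : i + 1 < w.count c) :
    ((w.take ((w.findIdxs (· == c)).getD (i + 1) 0)).drop
      ((w.findIdxs (· == c)).getD i 0 + 1)).count (!c) = gapLen c w (i + 1) := by
  induction w generalizing i with
  | nil => simp at h
  | cons x w ih =>
    rw [findIdxs_beq_cons]
    by_cases hx : x = c
    · have h' : i < w.count c := by simpa [hx] using h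
      rw [if_pos hx, List.getD_cons_succ, getD_map_add_one _ _ (by rwa [length_findIdxs_beq]),
        List.take_succ_cons, List.drop_succ_cons, gapLen, if_pos hx]
      rcases i with _ | i
      · simpa using count_take_findIdxs c w h'
      · rw [List.getD_cons_succ, getD_map_add_one _ _ (by rw [length_findIdxs_beq]; omega)]
        exact ih i h'
    · have h' : i + 1 < w.count c := by simpa [hx] using h
      rw [if_neg hx, getD_map_add_one _ _ (by rw [length_findIdxs_beq]; omega),
        getD_map_add_one _ _ (by rwa [length_findIdxs_beq]),
        List.take_succ_cons, List.drop_succ_cons, gapLen, if_neg hx]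
      exact ih i h'

lemma gapLen_zero_eq (c : Bool) (w : List Bool) (hw : w.head? = some (!c)) :
    gapLen c w 0 = gapAt 0 (runEnds (!c) w) := by
  induction w with
  | nil => simp at hw
  | cons x w ih =>
    obtain rfl : x = !c := by simpa using hw
    rcases w with _ | ⟨y, w⟩
    · cases c <;> simp [gapLen, runEnds, gapAt]
    · by_cases hy : y = !c
      · subst hy
        have := ih rfl
        rw [gapLen, this]
        cases c <;> simp [runEnds, gapAt]
      · obtain rfl : y = c := by simpa using hy
        cases y <;> simp [gapLen, runEnds, gapAt]

lemma gapLen_succ_eq (c : Bool) (w : List Bool) (i : ℕ) (h : i + 1 < w.count c) :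
    gapLen c w (i + 1) = if (runEnds c w).getD i false then
      gapAt (((runEnds c w).take (i + 1)).count true - if w.head? = some c then 1 else 0)
        (runEnds (!c) w) else 0 := by
  induction w generalizing i with
  | nil => simp at h
  | cons x w ih =>
    obtain ⟨y, hy⟩ : ∃ y, w.head? = some y := by
      rcases w with _ | ⟨y, w⟩
      · by_cases hx : x = c <;> simp [hx] at h
      · exact ⟨y, rfl⟩
    by_cases hx : x = c
    · subst hx
      rcases i with _ | i
      · by_cases hxy : y = x
        · subst hxy
          rcases w with _ | ⟨z, w⟩
          · simp at hy
          · simp_all [gapLen, runEnds]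
        · obtain rfl : y = !x := Bool.eq_not.2 hxy
          have := gapLen_zero_eq x w hy
          cases x <;> simp_all [gapLen, runEnds]
      · have := ih i (by simpa using h)
        rw [gapLen, if_pos rfl, this]
        cases x <;> cases y <;> simp [runEnds, hy]
    · obtain rfl : x = !c := Bool.eq_not.2 hx
      have h' : i + 1 < w.count c := by simpa using h
      have := ih i h'
      have hlen : i < (runEnds c w).length := by rw [length_runEnds]; omega
      have hpos : (runEnds c w).getD i false = true →
          0 < ((runEnds c w).take (i + 1)).count true := by
        intro hi
        rw [List.count_pos_iff, List.take_succ_eq_append_getElem hlen]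
        simp_all
      rw [gapLen, if_neg hx, this]
      generalize hk : ((runEnds c w).take (i + 1)).count true = k at hpos
      rcases k with _ | k
      · cases c <;> cases y <;> simp_all [runEnds]
      · cases c <;> cases y <;> simp [runEnds, hy, hk, gapAt]

lemma rStat_eq (w : List Bool) (hw : w.head? = some true) (i : ℕ) (h : i + 1 < w.count true) :
    rStat w (i + 1) = if (runEnds true w).getD i false then
      gapAt (((runEnds true w).take (i + 1)).count true - 1) (runEnds false w) else 0 := by
  have := gapLen_succ_eq true w i h
  rw [if_pos hw] at this
  exact (count_drop_take_findIdxs true w i h).trans this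

lemma sStat_eq (w : List Bool) (hw : w.head? = some true) (i : ℕ) (h : i + 1 < w.count false) :
    sStat w (i + 1) = if (runEnds false w).getD i false then
      gapAt (((runEnds false w).take (i + 1)).count true) (runEnds true w) else 0 := by
  have := gapLen_succ_eq false w i h
  simp only [hw, Option.some.injEq, Bool.true_eq_false, if_false, Nat.sub_zero,
    Bool.not_false] at this
  exact (count_drop_take_findIdxs false w i h).trans this
/-! ### Gaps -/

lemma gapAt_pos {k : ℕ} {l : List Bool} (h : k ≤ l.count true) : 0 < gapAt k l := by
  induction l generalizing k with
  | nil => simp_all [gapAt]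
  | cons x l ih => rcases x with _ | _ <;> rcases k with _ | k <;> simp_all [gapAt]

lemma gapAt_append_of_le {k : ℕ} {l : List Bool} (l' : List Bool) (h : k ≤ l.count true) :
    gapAt k (l ++ true :: l') = gapAt k l := by
  induction l generalizing k with
  | nil => simp_all [gapAt]
  | cons x l ih => rcases x with _ | _ <;> rcases k with _ | k <;> simp_all [gapAt]

lemma gapAt_append_add (k : ℕ) (l l' : List Bool) :
    gapAt (l.count true + 1 + k) (l ++ true :: l') = gapAt k l' := by
  induction l with
  | nil => simp [gapAt, add_comm 1 k]
  | cons x l ih =>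
    rcases x with _ | _
    · rw [← ih, List.count_cons_of_ne (by simp), add_right_comm, List.cons_append, gapAt]
    · rw [← ih, List.count_cons_self, add_right_comm, List.cons_append, gapAt, add_right_comm]

lemma gapAt_append_false {k : ℕ} {l : List Bool} (h : k ≤ l.count true) :
    gapAt k (l ++ [false]) = gapAt k l + if k = l.count true then 1 else 0 := by
  induction l generalizing k with
  | nil => simp_all [gapAt]
  | cons x l ih =>
    rcases x with _ | _ <;> rcases k with _ | k <;> simp_all [gapAt]
    omega

lemma gapAt_reverse (k : ℕ) (l : List Bool) (h : k ≤ l.count true) :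
    gapAt (l.count true - k) l.reverse = gapAt k l := by
  induction l generalizing k with
  | nil => simp_all
  | cons x l ih =>
    rcases x with _ | _
    · rw [List.count_cons_of_ne (by simp)] at h ⊢
      rw [List.reverse_cons, gapAt_append_false (by simp), List.count_reverse, ih k h]
      rcases k with _ | k
      · simp [gapAt]
      · rw [if_neg (by omega)]
        simp [gapAt]
    · rw [List.count_cons_self] at h ⊢
      rw [List.reverse_cons]
      rcases k with _ | k
      · have := gapAt_append_add 0 l.reverse []
        rw [List.count_reverse] at this
        simpa [gapAt] using this
      · rw [gapAt_append_of_le _ (by simp), Nat.add_sub_add_right, ih k (by omega), gapAt]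

/-! ### Paths -/

lemma isPath_append (t t' : ℕ) (u v : List (Bool × Bool)) :
    IsPath t (u ++ v) t' ↔ ∃ h, IsPath t u h ∧ IsPath h v t' := by
  induction u generalizing t with
  | nil => simp [IsPath]
  | cons x u ih => rcases x with ⟨_ | _, _ | _⟩ <;> rcases t with _ | t <;> simp [IsPath, ih]

lemma isPath_singleton_swap (x : Bool × Bool) (t t' : ℕ) :
    IsPath t [x] t' ↔ IsPath t' [x.swap] t := by
  rcases x with ⟨_ | _, _ | _⟩ <;> rcases t with _ | t <;> rcases t' with _ | t' <;>
    simp [IsPath] <;> omega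

lemma isPath_reverse_swap (t t' : ℕ) (w : List (Bool × Bool)) :
    IsPath t' (w.reverse.map Prod.swap) t ↔ IsPath t w t' := by
  induction w generalizing t with
  | nil => simp [IsPath, eq_comm]
  | cons x w ih =>
    rw [List.reverse_cons, List.map_append, isPath_append,
      show x :: w = [x] ++ w from rfl, isPath_append]
    simp only [ih, List.map_cons, List.map_nil, isPath_singleton_swap x, and_comm]

lemma isPath_iff (t t' : ℕ) (w : List (Bool × Bool)) :
    IsPath t w t' ↔ t + (w.map Prod.snd).count true = t' + (w.map Prod.fst).count true ∧
      ∀ m, ((w.map Prod.fst).take m).count true ≤ t + ((w.map Prod.snd).take m).count true := by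
  induction w generalizing t with
  | nil => simp [IsPath]
  | cons x w ih =>
    rw [← Nat.and_forall_add_one]
    rcases x with ⟨_ | _, _ | _⟩
    · simp [IsPath, ih]
    · simp [IsPath, ih]
      grind
    · rcases t with _ | t
      · simp only [IsPath, false_iff]
        rintro ⟨-, -, h⟩
        simpa using h 0
      · simp [IsPath, ih]
        grind
    · simp [IsPath, ih]
      grind

lemma IsPath.count_eq {t t' : ℕ} {w : List (Bool × Bool)} (h : IsPath t w t') :
    t + (w.map Prod.snd).count true = t' + (w.map Prod.fst).count true :=
  ((isPath_iff t t' w).1 h).1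

/-! ### Dyck words as paths -/

/-- The Dyck word whose `i`-th letters `true` and `false` end a run iff the first, respectively
second, component of the `i`-th letter of the path holds. -/
def dyckOf (w : List (Bool × Bool)) : List Bool :=
  fromRunEnds true (w.map Prod.fst ++ [true]) (w.map Prod.snd ++ [true])

lemma head?_dyckOf (w : List (Bool × Bool)) : (dyckOf w).head? = some true := by
  rcases w with _ | ⟨x, w⟩ <;> exact head?_fromRunEnds_true _ _ _

lemma runEnds_dyckOf {w : List (Bool × Bool)} (hw : IsPath 0 w 0) :
    runEnds true (dyckOf w) = w.map Prod.fst ++ [true] ∧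
      runEnds false (dyckOf w) = w.map Prod.snd ++ [true] := by
  refine runEnds_fromRunEnds true _ _ (by simp) (by simp) ?_
  simpa using hw.count_eq

lemma count_dyckOf {w : List (Bool × Bool)} (hw : IsPath 0 w 0) :
    (dyckOf w).count true = w.length + 1 ∧ (dyckOf w).count false = w.length + 1 := by
  rw [← length_runEnds, ← length_runEnds, (runEnds_dyckOf hw).1, (runEnds_dyckOf hw).2]
  simp

lemma dyckOf_injOn : Set.InjOn dyckOf {w | IsPath 0 w 0} := by
  intro u hu v hv h
  have hu' := runEnds_dyckOf hu
  have hv' := runEnds_dyckOf hv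
  rw [h, hv'.1, hv'.2] at hu'
  rw [List.zip_of_prod (List.append_cancel_right hu'.1).symm
    (List.append_cancel_right hu'.2).symm]
  exact (List.zip_of_prod rfl rfl).symm

/-- Appending `true` to both words does not change the ballot condition. -/
lemma take_append_true_iff {a b : List Bool} (hlen : a.length = b.length) :
    (∀ m, ((a ++ [true]).take m).count true ≤ ((b ++ [true]).take m).count true) ↔
      ∀ m, (a.take m).count true ≤ (b.take m).count true := by
  refine forall_congr' fun m => ?_
  rw [List.take_append, List.take_append, hlen, List.count_append, List.count_append,
    add_le_add_iff_right]

lemma isDyckWord_dyckOf {w : List (Bool × Bool)} (hw : IsPath 0 w 0) :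
    IsDyckWord (w.length + 1) (dyckOf w) := by
  obtain ⟨h1, h2⟩ := count_dyckOf hw
  obtain ⟨h3, h4⟩ := runEnds_dyckOf hw
  obtain ⟨h5, h6⟩ := (isPath_iff _ _ _).1 hw
  simp only [zero_add] at h5 h6
  refine ⟨?_, h1, h2, ?_⟩
  · rw [← List.count_true_add_count_false, h1, h2]
    ring
  · rw [ballot_iff _ (head?_dyckOf w) (h1.trans h2.symm) (by simp [h3, h4, h5]), h3, h4,
      take_append_true_iff (by simp)]
    exact h6

lemma exists_eq_append_true {l : List Bool} {N : ℕ} (hl : l.length = N + 1)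
    (hlast : ∀ x ∈ l.getLast?, x = true) : ∃ a, l = a ++ [true] ∧ a.length = N := by
  rcases List.eq_nil_or_concat l with rfl | ⟨a, x, rfl⟩
  · simp at hl
  · obtain rfl : x = true := by simpa using hlast
    exact ⟨a, by simp, by simpa using hl⟩

lemma exists_dyckOf_eq {N : ℕ} {v : List Bool} (hv : IsDyckWord (N + 1) v) :
    ∃ w, w.length = N ∧ IsPath 0 w 0 ∧ dyckOf w = v := by
  obtain ⟨hlen, ht, hf, hb⟩ := hv
  have hhead : v.head? = some true := by
    rcases v with _ | ⟨_ | _, v⟩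
    · simp at ht
    · simpa using hb [false] (by simp)
    · rfl
  have hlast : v.getLast? ≠ some true := by
    rcases List.eq_nil_or_concat v with rfl | ⟨p, x, rfl⟩
    · simp
    · rintro h
      obtain rfl : x = true := by simpa using h
      have := hb p (by simp)
      simp at ht hf
      omega
  have hcount := count_runEnds true v hhead
  rw [if_neg hlast, add_zero, Bool.not_true] at hcount
  obtain ⟨a, ha, hal⟩ := exists_eq_append_true ((length_runEnds true v).trans ht)
    (getLast?_runEnds true v)
  obtain ⟨b, hb', hbl⟩ := exists_eq_append_true ((length_runEnds false v).trans hf)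
    (getLast?_runEnds false v)
  have hfst : (a.zip b).map Prod.fst = a := List.map_fst_zip (by omega)
  have hsnd : (a.zip b).map Prod.snd = b := List.map_snd_zip (by omega)
  rw [ballot_iff v hhead (ht.trans hf.symm) hcount, ha, hb'] at hb
  rw [ha, hb'] at hcount
  have hcount' : a.count true = b.count true := by simpa using hcount
  refine ⟨a.zip b, by simp [hal, hbl], (isPath_iff _ _ _).2 ?_, ?_⟩
  · rw [hfst, hsnd]
    simpa [hcount'] using (take_append_true_iff (by omega)).1 hb
  · rw [dyckOf, hfst, hsnd, ← ha, ← hb']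
    exact fromRunEnds_runEnds true v (by simp [hhead])

lemma stats_dyckOf {u v : List (Bool × Bool)} {x y : Bool} (h : IsPath 0 (u ++ (x, y) :: v) 0) :
    rStat (dyckOf (u ++ (x, y) :: v)) (u.length + 1) = (if x then
      gapAt ((u.map Prod.fst).count true)
        (u.map Prod.snd ++ y :: (v.map Prod.snd ++ [true])) else 0) ∧
    sStat (dyckOf (u ++ (x, y) :: v)) (u.length + 1) = (if y then
      gapAt ((u.map Prod.snd).count true + 1)
        (u.map Prod.fst ++ x :: (v.map Prod.fst ++ [true])) else 0) := by
  obtain ⟨h1, h2⟩ := count_dyckOf h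
  obtain ⟨h3, h4⟩ := runEnds_dyckOf h
  rw [rStat_eq _ (head?_dyckOf _) _ (by simp [h1]), sStat_eq _ (head?_dyckOf _) _ (by simp [h2]),
    h3, h4]
  constructor
  · cases x <;> simp [List.take_append, List.take_of_length_le]
  · cases y <;> simp [List.take_append, List.take_of_length_le]

lemma star_iff {w : List (Bool × Bool)} (hw : IsPath 0 w 0) {i : ℕ} (hi : i < w.length) :
    0 < rStat (dyckOf w) (i + 1) ∧ 0 < sStat (dyckOf w) (i + 1) ↔ w[i] = (true, true) := by
  obtain ⟨u, ⟨x, y⟩, v, rfl, rfl⟩ : ∃ u x v, w = u ++ x :: v ∧ u.length = i :=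
    ⟨w.take i, w[i], w.drop (i + 1), by simp, by simp; omega⟩
  obtain ⟨h1, h2⟩ := stats_dyckOf hw
  have h3 := hw.count_eq
  rw [h1, h2]
  simp at h3
  cases x <;> cases y <;> simp
  constructor <;> apply gapAt_pos <;> simp at h3 ⊢ <;> omega

lemma stats_dyckOf_star {u v : List (Bool × Bool)} (h : IsPath 0 (u ++ (true, true) :: v) 0) :
    rStat (dyckOf (u ++ (true, true) :: v)) (u.length + 1) =
      gapAt ((u.map Prod.fst).count true) (u.map Prod.snd) ∧
    sStat (dyckOf (u ++ (true, true) :: v)) (u.length + 1) =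
      gapAt ((u.map Prod.snd).count true - (u.map Prod.fst).count true) (v.map Prod.fst) := by
  obtain ⟨h1, h2⟩ := stats_dyckOf h
  obtain ⟨k, hu, hv⟩ := (isPath_append _ _ _ _).1 h
  have hu := hu.count_eq
  have hv := IsPath.count_eq (w := v) hv
  rw [h1, h2, if_pos rfl, if_pos rfl]
  constructor
  · exact gapAt_append_of_le _ (by omega)
  · rw [show (u.map Prod.snd).count true + 1 = (u.map Prod.fst).count true + 1 +
      ((u.map Prod.snd).count true - (u.map Prod.fst).count true) by omega, gapAt_append_add]
    exact gapAt_append_of_le _ (by omega)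

lemma dyckOf_mem_dyckRS_iff {w : List (Bool × Bool)} (hw : IsPath 0 w 0) (r s : ℕ) :
    dyckOf w ∈ dyckRS (w.length + 1) r s ↔ ∃ u v, w = u ++ (true, true) :: v ∧
      (true, true) ∉ u ∧ (true, true) ∉ v ∧
      gapAt ((u.map Prod.fst).count true) (u.map Prod.snd) = r ∧
      gapAt ((u.map Prod.snd).count true - (u.map Prod.fst).count true) (v.map Prod.fst) = s := by
  constructor
  · rintro ⟨-, i, hi, hpos, hr, hs, huniq⟩
    simp only [add_tsub_cancel_right, Finset.mem_Icc] at hi huniq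
    obtain ⟨i, rfl⟩ := Nat.exists_eq_add_of_le' hi.1
    have hi' : i < w.length := hi.2
    have hstar := (star_iff hw hi').1 hpos
    have huniq' : ∀ j (hj : j < w.length), w[j] = (true, true) → j = i := fun j hj hwj =>
      Nat.succ_injective (huniq (j + 1) ⟨by omega, hj⟩ ((star_iff hw hj).2 hwj))
    have hsplit : w = w.take i ++ (true, true) :: w.drop (i + 1) := by
      rw [← hstar]; simp
    have hlen : (w.take i).length = i := by simp; omega
    have hw' := hw
    rw [hsplit] at hw'
    obtain ⟨h1, h2⟩ := stats_dyckOf_star hw'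
    rw [← hsplit, hlen] at h1 h2
    refine ⟨w.take i, w.drop (i + 1), hsplit, ?_, ?_, h1.symm.trans hr, h2.symm.trans hs⟩
    · intro hmem
      obtain ⟨j, hj, hj'⟩ := List.getElem_of_mem hmem
      rw [List.getElem_take] at hj'
      have := huniq' j (by simp at hj; omega) hj'
      omega
    · intro hmem
      obtain ⟨j, hj, hj'⟩ := List.getElem_of_mem hmem
      rw [List.getElem_drop] at hj'
      have := huniq' _ (by simp at hj; omega) hj'
      omega
  · rintro ⟨u, v, rfl, hu, hv, hr, hs⟩
    obtain ⟨h1, h2⟩ := stats_dyckOf_star hw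
    refine ⟨isDyckWord_dyckOf hw, u.length + 1, by simp, (star_iff hw (by simp)).2 (by simp),
      h1.trans hr, h2.trans hs, ?_⟩
    intro j hj hpos
    simp only [add_tsub_cancel_right, Finset.mem_Icc] at hj
    obtain ⟨j, rfl⟩ := Nat.exists_eq_add_of_le' hj.1
    have hstar := (star_iff hw hj.2).1 hpos
    rcases lt_trichotomy j u.length with h | rfl | h
    · rw [List.getElem_append_left h] at hstar
      exact absurd (hstar ▸ List.getElem_mem h) hu
    · rfl
    · rw [List.getElem_append_right h.le] at hstar
      obtain ⟨k, hk⟩ := Nat.exists_eq_add_of_lt h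
      have hk' : j - u.length = k + 1 := by omega
      simp only [hk', List.getElem_cons_succ] at hstar
      exact absurd (hstar ▸ List.getElem_mem _) hv

/-! ### Splitting at the unique common index -/

/-- Paths from height `h` to `0` without the letter `(true, true)` whose `h`-th gap between down
steps is `s`. -/
def IsGapDescent (h s : ℕ) (w : List (Bool × Bool)) : Prop :=
  ((true, true) ∉ w ∧ IsPath h w 0) ∧ gapAt h (w.map Prod.fst) = s

/-- The path with left part `u` (read from right to left), the letter `(true, true)` and right
part `v`. -/
def glue (u v : List (Bool × Bool)) : List (Bool × Bool) :=
  u.reverse.map Prod.swap ++ (true, true) :: v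

lemma notMem_reverse_swap {u : List (Bool × Bool)} :
    (true, true) ∉ u.reverse.map Prod.swap ↔ (true, true) ∉ u := by
  simp

lemma map_fst_reverse_swap (u : List (Bool × Bool)) :
    (u.reverse.map Prod.swap).map Prod.fst = (u.map Prod.snd).reverse := by
  simp [Function.comp_def]

lemma map_snd_reverse_swap (u : List (Bool × Bool)) :
    (u.reverse.map Prod.swap).map Prod.snd = (u.map Prod.fst).reverse := by
  simp [Function.comp_def]

lemma isPath_glue {h : ℕ} {u v : List (Bool × Bool)} (hu : IsPath h u 0) (hv : IsPath h v 0) :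
    IsPath 0 (glue u v) 0 :=
  (isPath_append _ _ _ _).2 ⟨h, (isPath_reverse_swap h 0 u).2 hu, hv⟩

lemma glue_inj {u v u' v' : List (Bool × Bool)} (hv : (true, true) ∉ v)
    (hv' : (true, true) ∉ v') (h : glue u v = glue u' v') : u = u' ∧ v = v' := by
  have hswap : Function.Injective (fun l : List (Bool × Bool) => l.reverse.map Prod.swap) :=
    (List.map_injective_iff.2 Prod.swap_injective).comp List.reverse_injective
  rcases List.append_eq_append_iff.1 h with ⟨l, h1, h2⟩ | ⟨l, h1, h2⟩ <;>
    rcases l with _ | ⟨x, l⟩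
  · exact ⟨hswap (by simpa using h1.symm), by simpa using h2⟩
  · exact absurd (by simp [(List.cons.inj h2).2]) hv
  · exact ⟨hswap (by simpa using h1), by simpa using h2.symm⟩
  · exact absurd (by simp [(List.cons.inj h2).2]) hv'

lemma dyckOf_glue_mem_dyckRS {h r s : ℕ} {u v : List (Bool × Bool)} (hu : IsGapDescent h r u)
    (hv : IsGapDescent h s v) : dyckOf (glue u v) ∈ dyckRS (u.length + v.length + 2) r s := by
  have hlen : u.length + v.length + 2 = (glue u v).length + 1 := by simp [glue]; omega
  have hc := hu.1.2.count_eq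
  rw [hlen, dyckOf_mem_dyckRS_iff (isPath_glue hu.1.2 hv.1.2)]
  refine ⟨_, _, rfl, notMem_reverse_swap.2 hu.1.1, hv.1.1, ?_, ?_⟩
  · have := gapAt_reverse h (u.map Prod.fst) (by omega)
    rw [hu.2] at this
    rw [← this, map_fst_reverse_swap, map_snd_reverse_swap, List.count_reverse]
    congr 1
    omega
  · rw [← hv.2, map_fst_reverse_swap, map_snd_reverse_swap, List.count_reverse,
      List.count_reverse]
    congr 1
    omega

lemma exists_glue_of_mem_dyckRS {M r s : ℕ} {w : List Bool} (hw : w ∈ dyckRS (M + 2) r s) :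
    ∃ h u v, u.length + v.length = M ∧ IsGapDescent h r u ∧ IsGapDescent h s v ∧
      dyckOf (glue u v) = w := by
  obtain ⟨p, hp, hpath, rfl⟩ := exists_dyckOf_eq hw.1
  rw [show M + 2 = p.length + 1 by omega, dyckOf_mem_dyckRS_iff hpath] at hw
  obtain ⟨u, v, rfl, hu, hv, hr, hs⟩ := hw
  obtain ⟨h, hup, hvp⟩ := (isPath_append _ _ _ _).1 hpath
  have hvp : IsPath h v 0 := hvp
  have hc := hup.count_eq
  have hrev : (u.reverse.map Prod.swap).reverse.map Prod.swap = u := by simp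
  refine ⟨h, u.reverse.map Prod.swap, v, by simp at hp ⊢; omega, ⟨⟨notMem_reverse_swap.2 hu,
    (isPath_reverse_swap _ _ _).2 hup⟩, ?_⟩, ⟨⟨hv, hvp⟩, ?_⟩, by rw [glue, hrev]⟩
  · have := gapAt_reverse ((u.map Prod.fst).count true) (u.map Prod.snd) (by omega)
    rw [hr] at this
    rw [← this, map_fst_reverse_swap]
    congr 1
    omega
  · rw [← hs]
    congr 1
    omega

lemma IsGapDescent.height_le {h s : ℕ} {w : List (Bool × Bool)} (hw : IsGapDescent h s w) :
    h ≤ w.length := by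
  have h1 := hw.1.2.count_eq
  have h2 := List.count_le_length (a := true) (l := w.map Prod.fst)
  rw [List.length_map] at h2
  omega

lemma IsGapDescent.height_unique {h h' s s' : ℕ} {w : List (Bool × Bool)}
    (hw : IsGapDescent h s w) (hw' : IsGapDescent h' s' w) : h = h' := by
  have h1 := hw.1.2.count_eq
  have h2 := hw'.1.2.count_eq
  omega

lemma ncard_dyckRS (M r s : ℕ) : (dyckRS (M + 2) r s).ncard =
    ∑ ij ∈ Finset.HasAntidiagonal.antidiagonal M, ∑ h : Fin (M + 1),
      countWords ij.1 (IsGapDescent h r) * countWords ij.2 (IsGapDescent h s) := by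
  have hfin : ∀ l h s, Finite {w // w.length = l ∧ IsGapDescent h s w} := fun l h s =>
    finite_words l _
  rw [← Finset.sum_coe_sort (Finset.HasAntidiagonal.antidiagonal M)]
  simp only [countWords, ← Nat.card_prod, ← Nat.card_sigma]
  rw [← Nat.card_coe_set_eq]
  symm
  refine Nat.card_congr (Equiv.ofBijective (fun x =>
    ⟨dyckOf (glue x.2.2.1.1 x.2.2.2.1), ?_⟩) ⟨?_, ?_⟩)
  · have := dyckOf_glue_mem_dyckRS x.2.2.1.2.2 x.2.2.2.2.2
    rwa [x.2.2.1.2.1, x.2.2.2.2.1, Finset.HasAntidiagonal.mem_antidiagonal.1 x.1.2] at this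
  · rintro ⟨⟨⟨i, j⟩, hij⟩, ⟨h, hh⟩, ⟨u, hu, hu'⟩, ⟨v, hv, hv'⟩⟩
      ⟨⟨⟨i', j'⟩, hij'⟩, ⟨h', hh'⟩, ⟨u', hu2, hu2'⟩, ⟨v', hv2, hv2'⟩⟩ heq
    simp only at hu hu' hv hv' hu2 hu2' hv2 hv2'
    have h1 := dyckOf_injOn (isPath_glue hu'.1.2 hv'.1.2) (isPath_glue hu2'.1.2 hv2'.1.2)
      (Subtype.ext_iff.1 heq)
    obtain ⟨rfl, rfl⟩ := glue_inj hv'.1.1 hv2'.1.1 h1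
    obtain rfl := hu'.height_unique hu2'
    subst hu hv hu2 hv2
    rfl
  · rintro ⟨w, hw⟩
    obtain ⟨h, u, v, hlen, hu, hv, rfl⟩ := exists_glue_of_mem_dyckRS hw
    have := hu.height_le
    exact ⟨⟨⟨(u.length, v.length), Finset.HasAntidiagonal.mem_antidiagonal.2 hlen⟩, ⟨h, by omega⟩,
      ⟨u, rfl, hu⟩, ⟨v, rfl, hv⟩⟩, rfl⟩

lemma ncard_dyckRS_eq_coeff (M r s : ℕ) : ((dyckRS (M + 2) r s).ncard : ℤ) =
    PowerSeries.coeff M (∑ h : Fin (M + 1), gapGF h h r * gapGF h h s) := by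
  rw [ncard_dyckRS, Finset.sum_comm, map_sum]
  push_cast
  refine Finset.sum_congr rfl fun h _ => ?_
  rw [PowerSeries.coeff_mul]
  simp only [gapGF, PowerSeries.coeff_mk]
  rfl

/-- **Remark.** `|𝒟ₙ^{r,s}|` depends only on `r + s`: for `r, s, r', s' ≥ 1` with
`r + s = r' + s'` and `n ≥ r + s`, `|𝒟ₙ^{r,s}| = |𝒟ₙ^{r',s'}|`. -/
theorem dyckRS_count_depends_on_sum (r s r' s' n : ℕ) (hr : 1 ≤ r) (hs : 1 ≤ s)
    (hr' : 1 ≤ r') (hs' : 1 ≤ s') (hsum : r + s = r' + s') (hn : r + s ≤ n) :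
    (dyckRS n r s).ncard = (dyckRS n r' s').ncard := by
  obtain ⟨M, rfl⟩ := Nat.exists_eq_add_of_le' (show 2 ≤ n by omega)
  obtain ⟨r, rfl⟩ := Nat.exists_eq_add_of_le' hr
  obtain ⟨s, rfl⟩ := Nat.exists_eq_add_of_le' hs
  obtain ⟨r', rfl⟩ := Nat.exists_eq_add_of_le' hr'
  obtain ⟨s', rfl⟩ := Nat.exists_eq_add_of_le' hs'
  have hrs : r + s = r' + s' := by omega
  rw [← Nat.cast_inj (R := ℤ), ncard_dyckRS_eq_coeff, ncard_dyckRS_eq_coeff]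
  congr 1
  refine Finset.sum_congr rfl fun h _ => ?_
  rw [gapGF_eq_pow h h r, gapGF_eq_pow h h s, gapGF_eq_pow h h r', gapGF_eq_pow h h s',
    mul_mul_mul_comm, ← pow_add, mul_mul_mul_comm, ← pow_add, hrs]
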